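/- Let D ⊂ ℂⁿ be a bounded α-regular domain, K ⊂ D a compact set, and ψ ∈ C(K) with sup_K ψ < 0 admitting a negative α-subharmonic extension to D. Then a point z₀ ∈ K is locally (α,ψ)-regular if and only if it is locally α-regular, i.e., for every neighborhood B ⊂ D of z₀ one has ω*_α(z₀, K ∩ B̄, D) = −1. -/

import Mathlib

open MeasureTheory Filter Topology Complex Metric

noncomputable section

/-- Complex `n`-space. -/
abbrev Cn (n : ℕ) := Fin n → ℂ

/-- The Wirtinger derivative `∂f/∂z_j` of a (real-differentiable) function `f : ℂⁿ → ℂ`. -/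
noncomputable def wdz {n : ℕ} (j : Fin n) (f : Cn n → ℂ) (z : Cn n) : ℂ :=
  (fderiv ℝ f z (Pi.single j 1) - Complex.I * fderiv ℝ f z (Pi.single j Complex.I)) / 2

/-- The Wirtinger derivative `∂f/∂z̄_j` of a (real-differentiable) function `f : ℂⁿ → ℂ`. -/
noncomputable def wdzbar {n : ℕ} (j : Fin n) (f : Cn n → ℂ) (z : Cn n) : ℂ :=
  (fderiv ℝ f z (Pi.single j 1) + Complex.I * fderiv ℝ f z (Pi.single j Complex.I)) / 2

/-- The square of the Euclidean norm `|z|² = ∑ |z_i|²` on `ℂⁿ`. -/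
noncomputable def sqNorm {n : ℕ} (z : Cn n) : ℝ := ∑ i, Complex.normSq (z i)

/-- A closed, strictly positive differential form `α` of bidegree `(n-1, n-1)` with `C¹`
coefficients on `ℂⁿ`, recorded through its normalized coefficient matrix:  `coeff j k` is
the Hermitian positive-definite matrix `A_{jk}` such that
`dd^c u ∧ α = (∑_{j,k} A_{jk} ∂²u/∂z_j∂z̄_k) dV`.  In these terms closedness of `α`
reads `∑_j ∂A_{jk}/∂z_j = 0` for every `k` (the conjugate identity follows by
Hermitian symmetry). -/
structure AlphaForm (n : ℕ) where
  coeff : Fin n → Fin n → Cn n → ℂ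
  contDiff : ∀ j k, ContDiff ℝ 1 (coeff j k)
  hermitian : ∀ j k z, coeff k j z = starRingEnd ℂ (coeff j k z)
  strictlyPositive : ∀ z : Cn n, ∀ ξ : Fin n → ℂ, ξ ≠ 0 →
    0 < (∑ j, ∑ k, coeff j k z * ξ j * starRingEnd ℂ (ξ k)).re
  closed : ∀ k, ∀ z : Cn n, (∑ j, wdz j (coeff j k) z) = 0

/-- The second order operator `f ↦ ∑_{j,k} A_{jk} ∂²f/∂z_j∂z̄_k` representing the
top-degree form `dd^c f ∧ α` (with respect to Lebesgue measure). -/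
noncomputable def alphaOp {n : ℕ} (A : AlphaForm n) (f : Cn n → ℂ) (z : Cn n) : ℂ :=
  ∑ j, ∑ k, A.coeff j k z * wdzbar k (wdz j f) z

/-- The operator `alphaOp` applied to a real-valued function, returning the real part. -/
noncomputable def alphaOpR {n : ℕ} (A : AlphaForm n) (ω : Cn n → ℝ) (z : Cn n) : ℝ :=
  (alphaOp A (fun w => (ω w : ℂ)) z).re

/-- `u : ℂⁿ → EReal` is `α`-subharmonic on `D`: it is finite-or-`-∞`, strongly upper
semicontinuous on `D`, locally integrable on `D`, and the current `dd^c u ∧ α` is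
positive, i.e. `∫_D u · (α ∧ dd^c ω) ≥ 0` for every nonnegative test function `ω` on `D`. -/
def IsAlphaSubharmonicE {n : ℕ} (A : AlphaForm n) (D : Set (Cn n)) (u : Cn n → EReal) : Prop :=
  (∀ z ∈ D, u z ≠ ⊤) ∧
  UpperSemicontinuousOn u D ∧
  (∀ z₀ ∈ D, ∀ S : Set (Cn n),
      (∃ N ∈ 𝓝 z₀, volume (N \ S) = 0) → Filter.limsup u (𝓝[S] z₀) = u z₀) ∧
  LocallyIntegrableOn (fun z => (u z).toReal) D volume ∧
  ∀ ω : Cn n → ℝ, ContDiff ℝ (⊤ : ℕ∞) ω → HasCompactSupport ω → tsupport ω ⊆ D →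
    (∀ z, 0 ≤ ω z) → 0 ≤ ∫ z in D, (u z).toReal * alphaOpR A ω z

/-- A real-valued function is `α`-subharmonic on `D` if it is so as an `EReal`-valued
function. -/
def IsAlphaSubharmonic {n : ℕ} (A : AlphaForm n) (D : Set (Cn n)) (u : Cn n → ℝ) : Prop :=
  IsAlphaSubharmonicE A D (fun z => (u z : EReal))

/-- `h` is `α`-harmonic on the open set `U`: `dd^c h ∧ α = 0` there, in the sense of
currents. -/
def IsAlphaHarmonicOn {n : ℕ} (A : AlphaForm n) (U : Set (Cn n)) (h : Cn n → ℝ) : Prop :=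
  LocallyIntegrableOn h U volume ∧
  ∀ ω : Cn n → ℝ, ContDiff ℝ (⊤ : ℕ∞) ω → HasCompactSupport ω → tsupport ω ⊆ U →
    (∫ z in U, h z * alphaOpR A ω z) = 0

/-- `u` is strictly `α`-subharmonic on `G`: for every compact subdomain `G' ⋐ G` there is
`ε > 0` with `u - ε|z|²` `α`-subharmonic on `G'`. -/
def IsStrictlyAlphaSubharmonic {n : ℕ} (A : AlphaForm n) (G : Set (Cn n)) (u : Cn n → ℝ) :
    Prop :=
  ∀ G' : Set (Cn n), IsOpen G' → IsCompact (closure G') → closure G' ⊆ G →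
    ∃ ε > (0 : ℝ), IsAlphaSubharmonic A G' (fun z => u z - ε * sqNorm z)

/-- `D` is a bounded `α`-regular domain: a bounded domain carrying a negative
`α`-subharmonic exhaustion `ρ` with boundary limit `0`. -/
def IsAlphaRegularDomain {n : ℕ} (A : AlphaForm n) (D : Set (Cn n)) : Prop :=
  IsOpen D ∧ IsConnected D ∧ Bornology.IsBounded D ∧
  ∃ ρ : Cn n → ℝ, IsAlphaSubharmonic A D ρ ∧ (∀ z ∈ D, ρ z < 0) ∧
    ∀ ζ ∈ frontier D, Filter.Tendsto ρ (𝓝[D] ζ) (𝓝 0)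

/-- `D` is a strongly `α`-regular domain: `D = {ρ < 0}` for some `ρ` which is `C²` and
strictly `α`-subharmonic on a neighborhood `D⁺` of `closure D`. -/
def IsStronglyAlphaRegularDomain {n : ℕ} (A : AlphaForm n) (D : Set (Cn n)) : Prop :=
  IsOpen D ∧ IsConnected D ∧ Bornology.IsBounded D ∧
  ∃ Dp : Set (Cn n), IsOpen Dp ∧ closure D ⊆ Dp ∧
    ∃ ρ : Cn n → ℝ, ContDiffOn ℝ 2 ρ Dp ∧ IsStrictlyAlphaSubharmonic A Dp ρ ∧
      D = {z ∈ Dp | ρ z < 0}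

/-- The class `U(E, D, ψ)` of `α`-subharmonic functions `u` on `D` with `u ≤ ψ` on `E`
and `u < 0` on `D`. -/
def Uclass {n : ℕ} (A : AlphaForm n) (E D : Set (Cn n)) (ψ : Cn n → ℝ) :
    Set (Cn n → ℝ) :=
  {u | IsAlphaSubharmonic A D u ∧ (∀ z ∈ E, u z ≤ ψ z) ∧ ∀ z ∈ D, u z < 0}

/-- The weighted extremal function `ω_α(z, E, D, ψ)`. -/
noncomputable def omegaW {n : ℕ} (A : AlphaForm n) (E D : Set (Cn n)) (ψ : Cn n → ℝ)
    (z : Cn n) : ℝ :=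
  sSup ((fun u : Cn n → ℝ => u z) '' Uclass A E D ψ)

/-- The weighted `α`-subharmonic measure `ω*_α(z, E, D, ψ)`: the upper semicontinuous
regularization of `ω_α(·, E, D, ψ)`. -/
noncomputable def omegaWStar {n : ℕ} (A : AlphaForm n) (E D : Set (Cn n)) (ψ : Cn n → ℝ)
    (z : Cn n) : ℝ :=
  Filter.limsup (omegaW A E D ψ) (𝓝 z)

/-- The (unweighted) extremal function `ω_α(z, E, D)`. -/
noncomputable def omega0 {n : ℕ} (A : AlphaForm n) (E D : Set (Cn n)) : Cn n → ℝ :=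
  omegaW A E D (fun _ => (-1 : ℝ))

/-- The (unweighted) `α`-subharmonic measure `ω*_α(z, E, D)`. -/
noncomputable def omega0Star {n : ℕ} (A : AlphaForm n) (E D : Set (Cn n)) : Cn n → ℝ :=
  omegaWStar A E D (fun _ => (-1 : ℝ))

/-- `S` is `α`-polar in `D`: there is an `α`-subharmonic `ρ` on `D`, not identically
`-∞`, with `ρ = -∞` on `S`. -/
def IsAlphaPolar {n : ℕ} (A : AlphaForm n) (D S : Set (Cn n)) : Prop :=
  ∃ ρ : Cn n → EReal, IsAlphaSubharmonicE A D ρ ∧ (∃ z ∈ D, ρ z ≠ ⊥) ∧ ∀ z ∈ S, ρ z = ⊥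

/-- `u` is plurisubharmonic on `D`: upper semicontinuous, locally integrable, and with
positive semidefinite complex Hessian in the sense of distributions. -/
def IsPlurisubharmonic {n : ℕ} (D : Set (Cn n)) (u : Cn n → ℝ) : Prop :=
  UpperSemicontinuousOn u D ∧ LocallyIntegrableOn u D volume ∧
  ∀ ξ : Fin n → ℂ, ∀ ω : Cn n → ℝ, ContDiff ℝ (⊤ : ℕ∞) ω → HasCompactSupport ω →
    tsupport ω ⊆ D → (∀ z, 0 ≤ ω z) →
    0 ≤ ∫ z in D, u z *
      (∑ j, ∑ k, ξ j * starRingEnd ℂ (ξ k) * wdzbar k (wdz j (fun w => (ω w : ℂ))) z).re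

/-- The class `U(E,D)` for the plurisubharmonic measure. -/
def UclassPsh {n : ℕ} (E D : Set (Cn n)) : Set (Cn n → ℝ) :=
  {u | IsPlurisubharmonic D u ∧ (∀ z ∈ E, u z ≤ -1) ∧ ∀ z ∈ D, u z < 0}

/-- The plurisubharmonic extremal function `ω(z, E, D)`. -/
noncomputable def omegaPsh {n : ℕ} (E D : Set (Cn n)) (z : Cn n) : ℝ :=
  sSup ((fun u : Cn n → ℝ => u z) '' UclassPsh E D)

/-- The plurisubharmonic measure `ω*(z, E, D)`. -/
noncomputable def omegaPshStar {n : ℕ} (E D : Set (Cn n)) (z : Cn n) : ℝ :=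
  Filter.limsup (omegaPsh E D) (𝓝 z)

end

/-!
Scaling by `c > 0` preserves `α`-subharmonicity, so it maps the competitors for a weight `φ` to
competitors for `ψ` on any set where `c * φ ≤ ψ`. For negative weights continuous at `z₀` this
holds near `z₀` as soon as `c > ψ z₀ / φ z₀`; letting `c` decrease to `ψ z₀ / φ z₀` turns local
`(α,ψ)`-regularity into the upper bound `φ z₀` for the measure of weight `φ`. The lower bound
comes from a competitor with value `φ z₀` at `z₀`: the given extension of `ψ`, or the constant
`-1` for the unweighted measure. Constants are `α`-subharmonic because `α` is closed, which puts
`dd^c ω ∧ α` in divergence form.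
-/

section WirtingerCalculus

open scoped ComplexConjugate ContDiff

variable {n : ℕ} (j : Fin n) {f g : Cn n → ℂ} {z : Cn n}

theorem tsupport_wdz_subset (f : Cn n → ℂ) : tsupport (wdz j f) ⊆ tsupport f := by
  refine closure_minimal (fun z hz => ?_) (isClosed_tsupport f)
  contrapose! hz
  simp [wdz, fderiv_of_notMem_tsupport ℝ hz]

theorem tsupport_wdzbar_subset (f : Cn n → ℂ) : tsupport (wdzbar j f) ⊆ tsupport f := by
  refine closure_minimal (fun z hz => ?_) (isClosed_tsupport f)
  contrapose! hz
  simp [wdzbar, fderiv_of_notMem_tsupport ℝ hz]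

theorem contDiff_wdz {k m : ℕ∞ω} (hf : ContDiff ℝ m f) (hkm : k + 1 ≤ m) :
    ContDiff ℝ k (wdz j f) := by
  have h := hf.fderiv_right hkm
  exact ((h.clm_apply contDiff_const).sub
    (contDiff_const.mul (h.clm_apply contDiff_const))).div_const 2

theorem wdzbar_conj (f : Cn n → ℂ) (z : Cn n) :
    wdzbar j (fun w => conj (f w)) z = conj (wdz j f z) := by
  have h : fderiv ℝ (fun w => conj (f w)) z = (conjCLE : ℂ →L[ℝ] ℂ).comp (fderiv ℝ f z) :=
    conjCLE.comp_fderiv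
  simp [wdzbar, wdz, h, map_ofNat]

theorem wdzbar_mul (hf : DifferentiableAt ℝ f z) (hg : DifferentiableAt ℝ g z) :
    wdzbar j (fun w => f w * g w) z = f z * wdzbar j g z + wdzbar j f z * g z := by
  simp only [wdzbar, fderiv_fun_mul hf hg, add_apply, smul_apply, smul_eq_mul]
  ring

theorem integrable_fderiv_apply {E F : Type*} [NormedAddCommGroup E] [NormedSpace ℝ E]
    [MeasurableSpace E] [OpensMeasurableSpace E] [NormedAddCommGroup F] [NormedSpace ℝ F]
    {μ : Measure E} [IsFiniteMeasureOnCompacts μ] {g : E → F} (hg : ContDiff ℝ 1 g)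
    (hgc : HasCompactSupport g) (v : E) : Integrable (fun x => fderiv ℝ g x v) μ :=
  ((hg.continuous_fderiv one_ne_zero).clm_apply continuous_const).integrable_of_hasCompactSupport
    (hgc.fderiv_apply ℝ v)

theorem integral_fderiv_apply_eq_zero {E F : Type*} [NormedAddCommGroup E] [NormedSpace ℝ E]
    [FiniteDimensional ℝ E] [MeasurableSpace E] [BorelSpace E] [NormedAddCommGroup F]
    [NormedSpace ℝ F] {μ : Measure E} [μ.IsAddHaarMeasure] {g : E → F} (hg : ContDiff ℝ 1 g)
    (hgc : HasCompactSupport g) (v : E) : ∫ x, fderiv ℝ g x v ∂μ = 0 := by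
  simpa using integral_smul_fderiv_eq_neg_fderiv_smul_of_integrable (𝕜 := ℝ)
    (f := fun _ => (1 : ℝ)) (g := g) (v := v) (μ := μ) (by simp)
    (by simpa using integrable_fderiv_apply hg hgc v)
    (by simpa using hg.continuous.integrable_of_hasCompactSupport hgc)
    (fun _ _ => differentiableAt_const _) fun x _ => hg.differentiable one_ne_zero x

theorem integrable_wdzbar (hg : ContDiff ℝ 1 g) (hgc : HasCompactSupport g) :
    Integrable (wdzbar j g) :=
  ((integrable_fderiv_apply hg hgc _).add
    ((integrable_fderiv_apply hg hgc _).const_mul I)).div_const 2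

theorem integral_wdzbar_eq_zero (hg : ContDiff ℝ 1 g) (hgc : HasCompactSupport g) :
    ∫ z, wdzbar j g z = 0 := by
  simp only [wdzbar]
  rw [integral_div, integral_add (integrable_fderiv_apply hg hgc _)
    ((integrable_fderiv_apply hg hgc _).const_mul I), integral_const_mul,
    integral_fderiv_apply_eq_zero hg hgc, integral_fderiv_apply_eq_zero hg hgc]
  simp

end WirtingerCalculus

section AlphaOperator

variable {n : ℕ} (A : AlphaForm n) {f : Cn n → ℂ}

theorem AlphaForm.sum_wdzbar_coeff_eq_zero (j : Fin n) (z : Cn n) :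
    ∑ k, wdzbar k (A.coeff j k) z = 0 := by
  have hcoeff : ∀ k, A.coeff j k = fun w => starRingEnd ℂ (A.coeff k j w) :=
    fun k => funext fun w => A.hermitian k j w
  calc ∑ k, wdzbar k (A.coeff j k) z
      = ∑ k, starRingEnd ℂ (wdz k (A.coeff k j) z) :=
        Finset.sum_congr rfl fun k _ => by rw [hcoeff k, wdzbar_conj]
    _ = 0 := by rw [← map_sum, A.closed j z, map_zero]

theorem alphaOp_eq_sum_wdzbar (hf : ContDiff ℝ 2 f) (z : Cn n) :
    alphaOp A f z = ∑ j, ∑ k, wdzbar k (fun w => A.coeff j k w * wdz j f w) z := by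
  refine Finset.sum_congr rfl fun j _ => ?_
  have hwdz : DifferentiableAt ℝ (wdz j f) z :=
    (contDiff_wdz j hf one_add_one_eq_two.le).differentiable one_ne_zero z
  have hcoeff : ∀ k, DifferentiableAt ℝ (A.coeff j k) z :=
    fun k => (A.contDiff j k).differentiable one_ne_zero z
  simp only [wdzbar_mul _ (hcoeff _) hwdz, Finset.sum_add_distrib, ← Finset.sum_mul,
    A.sum_wdzbar_coeff_eq_zero, zero_mul, add_zero]

theorem contDiff_coeff_mul_wdz (hf : ContDiff ℝ 2 f) (j k : Fin n) :
    ContDiff ℝ 1 (fun z => A.coeff j k z * wdz j f z) :=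
  (A.contDiff j k).mul (contDiff_wdz j hf one_add_one_eq_two.le)

theorem hasCompactSupport_coeff_mul_wdz (hfc : HasCompactSupport f) (j k : Fin n) :
    HasCompactSupport (fun z => A.coeff j k z * wdz j f z) :=
  (hfc.mono' ((subset_tsupport _).trans (tsupport_wdz_subset j f))).mul_left

theorem integrable_alphaOp (hf : ContDiff ℝ 2 f) (hfc : HasCompactSupport f) :
    Integrable (alphaOp A f) := by
  rw [funext (alphaOp_eq_sum_wdzbar A hf)]
  exact integrable_finsetSum _ fun j _ => integrable_finsetSum _ fun k _ =>
    integrable_wdzbar k (contDiff_coeff_mul_wdz A hf j k)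
      (hasCompactSupport_coeff_mul_wdz A hfc j k)

theorem integral_alphaOp_eq_zero (hf : ContDiff ℝ 2 f) (hfc : HasCompactSupport f) :
    ∫ z, alphaOp A f z = 0 := by
  have hC := contDiff_coeff_mul_wdz A hf
  have hS := hasCompactSupport_coeff_mul_wdz A hfc
  have hint := fun j k => integrable_wdzbar k (hC j k) (hS j k)
  simp only [alphaOp_eq_sum_wdzbar A hf]
  rw [integral_finsetSum _ fun j _ => integrable_finsetSum _ fun k _ => hint j k]
  refine Finset.sum_eq_zero fun j _ => ?_
  rw [integral_finsetSum _ fun k _ => hint j k]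
  exact Finset.sum_eq_zero fun k _ => integral_wdzbar_eq_zero k (hC j k) (hS j k)

theorem alphaOp_eq_zero_of_notMem_tsupport {z : Cn n} (hz : z ∉ tsupport f) :
    alphaOp A f z = 0 := by
  have h : ∀ j k, wdzbar k (wdz j f) z = 0 := fun j k => image_eq_zero_of_notMem_tsupport
    fun h => hz (tsupport_wdz_subset j f (tsupport_wdzbar_subset k _ h))
  simp only [alphaOp, h, mul_zero, Finset.sum_const_zero]

theorem setIntegral_alphaOpR_eq_zero {D : Set (Cn n)} {ω : Cn n → ℝ} (hω : ContDiff ℝ 2 ω)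
    (hωc : HasCompactSupport ω) (hωD : tsupport ω ⊆ D) : ∫ z in D, alphaOpR A ω z = 0 := by
  let f : Cn n → ℂ := fun z => (ω z : ℂ)
  have hf : ContDiff ℝ 2 f := ofRealCLM.contDiff.comp hω
  have hfc : HasCompactSupport f := hωc.comp_left ofReal_zero
  have hfD : tsupport f ⊆ D := (closure_mono (Function.support_comp_subset ofReal_zero ω)).trans hωD
  calc ∫ z in D, alphaOpR A ω z
      = ∫ z, (alphaOp A f z).re := setIntegral_eq_integral_of_forall_compl_eq_zero
        fun z hz => by
          rw [alphaOpR, alphaOp_eq_zero_of_notMem_tsupport A fun h => hz (hfD h), zero_re]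
    _ = (∫ z, alphaOp A f z).re := integral_re (𝕜 := ℂ) (integrable_alphaOp A hf hfc)
    _ = 0 := by rw [integral_alphaOp_eq_zero A hf hfc, zero_re]

end AlphaOperator

section AlphaSubharmonic

variable {n : ℕ} {A : AlphaForm n} {D : Set (Cn n)}

theorem nhdsWithin_neBot_of_measure_diff_eq_zero {X : Type*} [TopologicalSpace X]
    [MeasurableSpace X] {μ : Measure X} [μ.IsOpenPosMeasure] {x : X} {S : Set X}
    (hS : ∃ N ∈ 𝓝 x, μ (N \ S) = 0) : (𝓝[S] x).NeBot := by
  obtain ⟨N, hN, hNS⟩ := hS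
  rw [← mem_closure_iff_nhdsWithin_neBot]
  by_contra hx
  have hSc : Sᶜ ∈ 𝓝 x :=
    mem_of_superset (isClosed_closure.isOpen_compl.mem_nhds hx)
      (Set.compl_subset_compl.2 subset_closure)
  exact (Measure.measure_pos_of_mem_nhds μ (inter_mem hN hSc)).ne' hNS

theorem isAlphaSubharmonic_const (A : AlphaForm n) (D : Set (Cn n)) (c : ℝ) :
    IsAlphaSubharmonic A D fun _ => c := by
  refine ⟨fun z _ => EReal.coe_ne_top c, upperSemicontinuousOn_const, fun z _ S hS => ?_,
    locallyIntegrableOn_const _, fun ω hω hωc hωD _ => ?_⟩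
  · have := nhdsWithin_neBot_of_measure_diff_eq_zero hS
    exact limsup_const _
  · rw [integral_const_mul,
      setIntegral_alphaOpR_eq_zero A (contDiff_infty.1 hω 2) hωc hωD, mul_zero]

theorem continuous_coe_mul_ereal {c : ℝ} (hc : c ≠ 0) :
    Continuous fun x : EReal => (c : EReal) * x := by
  have hc' : (c : EReal) ≠ 0 := EReal.coe_ne_zero.2 hc
  refine continuous_iff_continuousAt.2 fun x => ?_
  have hmul : ContinuousAt (fun p : EReal × EReal => p.1 * p.2) ((c : EReal), x) :=
    EReal.continuousAt_mul (.inl hc') (.inl hc') (.inl (EReal.coe_ne_bot c))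
      (.inl (EReal.coe_ne_top c))
  exact hmul.comp' (Continuous.prodMk_right (c : EReal)).continuousAt

theorem IsAlphaSubharmonicE.const_mul {u : Cn n → EReal} (hu : IsAlphaSubharmonicE A D u)
    {c : ℝ} (hc : 0 < c) : IsAlphaSubharmonicE A D fun z => c * u z := by
  obtain ⟨hu_ne_top, hu_usc, hu_limsup, hu_int, hu_pos⟩ := hu
  have hc' : (0 : EReal) ≤ c := EReal.coe_nonneg.2 hc.le
  have hmono : Monotone fun x : EReal => c * x := fun _ _ hxy => mul_le_mul_of_nonneg_left hxy hc'
  have hcont : Continuous fun x : EReal => c * x := continuous_coe_mul_ereal hc.ne'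
  refine ⟨fun z hz => ?_, hcont.comp_upperSemicontinuousOn hu_usc hmono, fun z hz S hS => ?_, ?_,
    fun ω hω hωc hωD hω0 => ?_⟩
  · exact (EReal.mul_ne_top _ _).2 ⟨.inl (EReal.coe_ne_bot c), .inl hc',
      .inl (EReal.coe_ne_top c), .inr (hu_ne_top z hz)⟩
  · have := nhdsWithin_neBot_of_measure_diff_eq_zero hS
    exact (EReal.limsup_const_mul_of_nonneg_of_ne_top hc' (EReal.coe_ne_top c)).trans
      (congrArg _ (hu_limsup z hz S hS))
  · simp only [EReal.toReal_mul, EReal.toReal_coe]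
    exact hu_int.smul c
  · simp only [EReal.toReal_mul, EReal.toReal_coe, mul_assoc, integral_const_mul]
    exact mul_nonneg hc.le (hu_pos ω hω hωc hωD hω0)

theorem IsAlphaSubharmonic.const_mul {u : Cn n → ℝ} (hu : IsAlphaSubharmonic A D u) {c : ℝ}
    (hc : 0 < c) : IsAlphaSubharmonic A D fun z => c * u z := by
  simpa only [IsAlphaSubharmonic, EReal.coe_mul] using IsAlphaSubharmonicE.const_mul hu hc

end AlphaSubharmonic

section ExtremalFunction

variable {n : ℕ} {A : AlphaForm n} {D E E' : Set (Cn n)} {φ ψ v : Cn n → ℝ} {c : ℝ}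
  {z : Cn n}

theorem const_mem_uclass (hcφ : ∀ w ∈ E, c ≤ φ w) (hc : c < 0) :
    (fun _ => c) ∈ Uclass A E D φ :=
  ⟨isAlphaSubharmonic_const A D c, hcφ, fun _ _ => hc⟩

theorem uclass_antitone_left (hE : E' ⊆ E) : Uclass A E D φ ⊆ Uclass A E' D φ :=
  fun _ hu => ⟨hu.1, fun w hw => hu.2.1 w (hE hw), hu.2.2⟩

theorem const_mul_mem_uclass (hv : v ∈ Uclass A E D φ) (hc : 0 < c)
    (hcφ : ∀ w ∈ E, c * φ w ≤ ψ w) : (fun w => c * v w) ∈ Uclass A E D ψ :=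
  ⟨hv.1.const_mul hc,
    fun w hw => (mul_le_mul_of_nonneg_left (hv.2.1 w hw) hc.le).trans (hcφ w hw),
    fun w hw => mul_neg_of_pos_of_neg hc (hv.2.2 w hw)⟩

theorem le_omegaW (hz : z ∈ D) (hv : v ∈ Uclass A E D φ) : v z ≤ omegaW A E D φ z :=
  le_csSup ⟨0, by rintro _ ⟨u, hu, rfl⟩; exact (hu.2.2 z hz).le⟩ ⟨v, hv, rfl⟩

theorem omegaW_nonpos (hz : z ∈ D) : omegaW A E D φ z ≤ 0 :=
  Real.sSup_nonpos <| by rintro _ ⟨u, hu, rfl⟩; exact (hu.2.2 z hz).le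

theorem mul_omegaW_le_omegaW (hne : (Uclass A E D φ).Nonempty) (hz : z ∈ D) (hE : E' ⊆ E)
    (hc : 0 < c) (hcφ : ∀ w ∈ E', c * φ w ≤ ψ w) :
    c * omegaW A E D φ z ≤ omegaW A E' D ψ z := by
  rw [← le_div_iff₀' hc]
  refine csSup_le (hne.image _) ?_
  rintro _ ⟨u, hu, rfl⟩
  exact (le_div_iff₀' hc).2
    (le_omegaW hz (const_mul_mem_uclass (uclass_antitone_left hE hu) hc hcφ))

theorem isBoundedUnder_le_omegaW (hD : D ∈ 𝓝 z) :
    (𝓝 z).IsBoundedUnder (· ≤ ·) (omegaW A E D φ) :=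
  isBoundedUnder_of_eventually_le (a := 0) (mem_of_superset hD fun _ hw => omegaW_nonpos hw)

theorem frequently_le_omegaW (hz : z ∈ D) (hv : v ∈ Uclass A E D φ) :
    ∃ᶠ w in 𝓝 z, v z ≤ omegaW A E D φ w :=
  fun h => h.self_of_nhds (le_omegaW hz hv)

theorem le_omegaWStar (hD : D ∈ 𝓝 z) (hv : v ∈ Uclass A E D φ) :
    v z ≤ omegaWStar A E D φ z :=
  le_limsup_of_frequently_le (frequently_le_omegaW (mem_of_mem_nhds hD) hv)
    (isBoundedUnder_le_omegaW hD)

theorem mul_omegaWStar_le_omegaWStar (hne : (Uclass A E D φ).Nonempty) (hD : D ∈ 𝓝 z)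
    (hE : E' ⊆ E) (hc : 0 < c) (hcφ : ∀ w ∈ E', c * φ w ≤ ψ w) :
    c * omegaWStar A E D φ z ≤ omegaWStar A E' D ψ z := by
  obtain ⟨v, hv⟩ := hne
  have hz := mem_of_mem_nhds hD
  have hscaled : ∃ᶠ w in 𝓝 z, c * v z ≤ c * omegaW A E D φ w :=
    (frequently_le_omegaW hz hv).mono fun _ hw => mul_le_mul_of_nonneg_left hw hc.le
  calc c * omegaWStar A E D φ z
      = limsup (fun w => c * omegaW A E D φ w) (𝓝 z) :=
        (monotone_mul_left_of_nonneg hc.le).map_limsup_of_continuousAt _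
          (continuous_const_mul c).continuousAt (isBoundedUnder_le_omegaW hD)
          (.of_frequently_ge (frequently_le_omegaW hz hv))
    _ ≤ omegaWStar A E' D ψ z :=
        limsup_le_limsup
          (mem_of_superset hD fun _ hw => mul_omegaW_le_omegaW ⟨v, hv⟩ hw hE hc hcφ)
          (.of_frequently_ge hscaled) (isBoundedUnder_le_omegaW hD)

end ExtremalFunction

section LocalRegularity

variable {n : ℕ} {A : AlphaForm n} {D K N : Set (Cn n)} {φ ψ u v : Cn n → ℝ} {z₀ : Cn n}

/-- Local `(α,ψ)`-regularity of `z₀` for the set `K`: the weighted `α`-subharmonic measure of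
every trace of `K` on a closed neighbourhood of `z₀` takes the value `ψ z₀` at `z₀`. -/
def IsLocallyAlphaRegularAt (A : AlphaForm n) (K D : Set (Cn n)) (ψ : Cn n → ℝ) (z₀ : Cn n) :
    Prop :=
  ∀ B : Set (Cn n), B ∈ 𝓝 z₀ → omegaWStar A (K ∩ closure B) D ψ z₀ = ψ z₀

theorem isLocallyAlphaRegularAt_iff_forall_subset (hD : D ∈ 𝓝 z₀) (hN : N ∈ 𝓝 z₀)
    (hv : v ∈ Uclass A K D φ) (hvz₀ : v z₀ = φ z₀) :
    IsLocallyAlphaRegularAt A K D φ z₀ ↔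
      ∀ B : Set (Cn n), B ∈ 𝓝 z₀ → B ⊆ N → omegaWStar A (K ∩ closure B) D φ z₀ = φ z₀ := by
  refine ⟨fun h B hB _ => h B hB, fun h B hB => le_antisymm ?_ ?_⟩
  · have hvB := uclass_antitone_left (Set.inter_subset_left (t := closure B)) hv
    rw [← h (B ∩ N) (inter_mem hB hN) Set.inter_subset_right]
    simpa only [one_mul] using mul_omegaWStar_le_omegaWStar ⟨v, hvB⟩ hD
      (Set.inter_subset_inter_right K (closure_mono Set.inter_subset_left)) one_pos
      fun w _ => (one_mul (φ w)).le
  · exact hvz₀ ▸ le_omegaWStar hD (uclass_antitone_left Set.inter_subset_left hv)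

theorem exists_mem_nhds_closure_subset_of_eventually_nhdsWithin {X : Type*} [TopologicalSpace X]
    [RegularSpace X] {x : X} {K B : Set X} {p : X → Prop} (hB : B ∈ 𝓝 x)
    (hp : ∀ᶠ y in 𝓝[K] x, p y) :
    ∃ B' ∈ 𝓝 x, closure B' ⊆ B ∧ ∀ y ∈ K ∩ closure B', p y := by
  obtain ⟨B', hB', hclosed, hsub⟩ :=
    exists_mem_nhds_isClosed_subset (inter_mem hB (eventually_nhdsWithin_iff.1 hp))
  rw [← hclosed.closure_eq] at hsub
  exact ⟨B', hB', fun y hy => (hsub hy).1, fun y hy => (hsub hy.2).2 hy.1⟩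

theorem IsLocallyAlphaRegularAt.mul_omegaWStar_le (hψreg : IsLocallyAlphaRegularAt A K D ψ z₀)
    (hD : D ∈ 𝓝 z₀) (hφ : ContinuousWithinAt φ K z₀) (hψ : ContinuousWithinAt ψ K z₀)
    {B : Set (Cn n)} (hB : B ∈ 𝓝 z₀) (hne : (Uclass A (K ∩ closure B) D φ).Nonempty) {c : ℝ}
    (hc : 0 < c) (hcφ : c * φ z₀ < ψ z₀) :
    c * omegaWStar A (K ∩ closure B) D φ z₀ ≤ ψ z₀ := by
  obtain ⟨B', hB', hB'B, hcφB'⟩ := exists_mem_nhds_closure_subset_of_eventually_nhdsWithin hB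
    ((hφ.const_mul c).eventually_lt hψ hcφ)
  rw [← hψreg B' hB']
  exact mul_omegaWStar_le_omegaWStar hne hD
    (Set.inter_subset_inter_right K (hB'B.trans subset_closure)) hc fun w hw => (hcφB' w hw).le

theorem IsLocallyAlphaRegularAt.change_weight (hψreg : IsLocallyAlphaRegularAt A K D ψ z₀)
    (hD : D ∈ 𝓝 z₀) (hφ : ContinuousWithinAt φ K z₀) (hψ : ContinuousWithinAt ψ K z₀)
    (hψz₀ : ψ z₀ < 0) (hv : v ∈ Uclass A K D φ) (hvz₀ : v z₀ = φ z₀) :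
    IsLocallyAlphaRegularAt A K D φ z₀ := by
  intro B hB
  have hvB : v ∈ Uclass A (K ∩ closure B) D φ := uclass_antitone_left Set.inter_subset_left hv
  have hφz₀ : φ z₀ < 0 := hvz₀ ▸ hv.2.2 z₀ (mem_of_mem_nhds hD)
  refine le_antisymm ?_ (hvz₀ ▸ le_omegaWStar hD hvB)
  have hscaled : ∀ c ∈ Set.Ioi (ψ z₀ / φ z₀),
      c * omegaWStar A (K ∩ closure B) D φ z₀ ≤ ψ z₀ := fun c hc =>
    hψreg.mul_omegaWStar_le hD hφ hψ hB ⟨v, hvB⟩ ((div_pos_of_neg_of_neg hψz₀ hφz₀).trans hc)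
      ((div_lt_iff_of_neg hφz₀).1 hc)
  have hlim : ψ z₀ / φ z₀ * omegaWStar A (K ∩ closure B) D φ z₀ ≤ ψ z₀ :=
    le_of_tendsto ((continuous_mul_const _).tendsto _ |>.mono_left nhdsWithin_le_nhds)
      (eventually_nhdsWithin_of_forall hscaled)
  calc omegaWStar A (K ∩ closure B) D φ z₀
      ≤ ψ z₀ / (ψ z₀ / φ z₀) := (le_div_iff₀' (div_pos_of_neg_of_neg hψz₀ hφz₀)).2 hlim
    _ = φ z₀ := div_div_cancel₀ hψz₀.ne

theorem isLocallyAlphaRegularAt_congr_weight (hD : D ∈ 𝓝 z₀) (hφ : ContinuousWithinAt φ K z₀)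
    (hψ : ContinuousWithinAt ψ K z₀) (hu : u ∈ Uclass A K D φ) (huz₀ : u z₀ = φ z₀)
    (hv : v ∈ Uclass A K D ψ) (hvz₀ : v z₀ = ψ z₀) :
    IsLocallyAlphaRegularAt A K D φ z₀ ↔ IsLocallyAlphaRegularAt A K D ψ z₀ :=
  have hz₀ := mem_of_mem_nhds hD
  ⟨fun h => h.change_weight hD hψ hφ (huz₀ ▸ hu.2.2 z₀ hz₀) hv hvz₀,
    fun h => h.change_weight hD hφ hψ (hvz₀ ▸ hv.2.2 z₀ hz₀) hu huz₀⟩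

theorem locally_weighted_regular_iff_locally_regular_general (hD : D ∈ 𝓝 z₀)
    (hψ : ContinuousWithinAt ψ K z₀) (hv : v ∈ Uclass A K D ψ) (hvz₀ : v z₀ = ψ z₀) :
    (∀ B : Set (Cn n), B ∈ 𝓝 z₀ → omegaWStar A (K ∩ closure B) D ψ z₀ = ψ z₀) ↔
      (∀ B : Set (Cn n), B ∈ 𝓝 z₀ → B ⊆ D →
        omega0Star A (K ∩ closure B) D z₀ = -1) :=
  have hone : (fun _ => -1) ∈ Uclass A K D fun _ => (-1 : ℝ) :=
    const_mem_uclass (fun _ _ => le_rfl) neg_one_lt_zero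
  (isLocallyAlphaRegularAt_congr_weight hD hψ continuousWithinAt_const hv hvz₀ hone rfl).trans
    (isLocallyAlphaRegularAt_iff_forall_subset hD hD hone rfl)

end LocalRegularity

/-- For `ψ ∈ C(K)` with `sup_K ψ < 0` admitting a negative
`α`-subharmonic extension to `D`, a point `z₀ ∈ K` is locally `(α,ψ)`-regular iff it is
locally `α`-regular, i.e. `ω*_α(z₀, K ∩ B̄, D) = -1` for every neighborhood `B ⊆ D`
of `z₀`. -/
theorem locally_weighted_regular_iff_locally_regular {n : ℕ} (A : AlphaForm n)
    (D K : Set (Cn n)) (hD : IsAlphaRegularDomain A D) (hK : IsCompact K) (hKD : K ⊆ D)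
    (ψ : Cn n → ℝ) (hψc : ContinuousOn ψ K)
    (hsup : ∃ c < (0 : ℝ), ∀ z ∈ K, ψ z ≤ c)
    (hext : ∃ ψt : Cn n → ℝ, IsAlphaSubharmonic A D ψt ∧ (∀ z ∈ D, ψt z < 0) ∧
      ∀ z ∈ K, ψt z = ψ z)
    (z₀ : Cn n) (hz₀ : z₀ ∈ K) :
    (∀ B : Set (Cn n), B ∈ 𝓝 z₀ → omegaWStar A (K ∩ closure B) D ψ z₀ = ψ z₀) ↔
      (∀ B : Set (Cn n), B ∈ 𝓝 z₀ → B ⊆ D →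
        omega0Star A (K ∩ closure B) D z₀ = -1) := by
  obtain ⟨v, hv, hv_neg, hvψ⟩ := hext
  exact locally_weighted_regular_iff_locally_regular_general (hD.1.mem_nhds (hKD hz₀))
    (hψc z₀ hz₀) ⟨hv, fun z hz => (hvψ z hz).le, hv_neg⟩ (hvψ z₀ hz₀)
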